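/- Let f : A' → A be a homomorphism of noetherian local commutative rings, let a' = (a'_0, …, a'_r) be a regular sequence in A' with r ≥ 1 whose image a = (a_0, …, a_r) in A is again a regular sequence, and fix an index i with 0 ≤ i ≤ r. Let B' = A'[S_0, …, Ŝ_i, …, S_r] and B = A[S_0, …, Ŝ_i, …, S_r] be the polynomial rings in the variables S_j, j ≠ i, and let g : B' → B be the homomorphism extending f with g(S_j) = S_j. Then Tor_k^{B'}(B, B'/(a'_i S_j − a'_j : j ≠ i)) = 0 for all k > 0, and the natural map B ⊗_{B'} B'/(a'_i S_j − a'_j : j ≠ i) → B/(a_i S_j − a_j : j ≠ i) is an isomorphism. -/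

import Mathlib

/-!
STATEMENT 6: Let `f : A' → A` be a homomorphism of noetherian local commutative rings
(encoded as the structure map of an `A'`-algebra structure on `A`), let
`a' = (a'_0, …, a'_r)` be a regular sequence in `A'` with `r ≥ 1` whose image in `A` is
again a regular sequence, and fix `i`.  Let `B' = A'[S_j : j ≠ i]`, `B = A[S_j : j ≠ i]`
and `g : B' → B` the homomorphism extending `f` with `g(S_j) = S_j` (i.e. the algebra
structure `MvPolynomial.algebraMvPolynomial`, whose structure map is
`MvPolynomial.map f`).  Then `Tor_k^{B'}(B, B'/(a'_i S_j − a'_j : j ≠ i)) = 0` for all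
`k > 0`, and the natural map
`B ⊗[B'] B'/(a'_i S_j − a'_j : j ≠ i) → B/(a_i S_j − a_j : j ≠ i)` is an isomorphism.
-/

/-- A list `xs = [x_1, …, x_n]` of elements of a commutative ring `R` is a regular
sequence if for each `k` the image of `x_{k+1}` in `R ⧸ (x_1, …, x_k)` is a
nonzerodivisor. -/
def IsRegularSequence {R : Type*} [CommRing R] (xs : List R) : Prop :=
  ∀ (k : ℕ) (hk : k < xs.length)
    (y : R ⧸ Ideal.span {r | r ∈ xs.take k}),
    Ideal.Quotient.mk (Ideal.span {r | r ∈ xs.take k}) (xs.get ⟨k, hk⟩) * y = 0 → y = 0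

attribute [local instance] MvPolynomial.algebraMvPolynomial

/-!
Write `x = a'_i` and `N = B'/(x S_j − a'_j : j ≠ i)`, and let `K` be an `A'`-module on which the
sequence `a'` is regular.

* `x` is a nonzerodivisor on `N ⊗ K = K[S]/(x S_j − a'_j)K[S]`: if `x p = ∑ (x S_j − a'_j) q_j`,
  where `S_i = 1` and `q_i` is chosen so that `p = ∑ S_j q_j`, then `∑ a'_j q_j = 0`, so `q` is a
  combination of the Koszul syzygies of `a'`; substituting these puts `p` in `(x S_j − a'_j)K[S]`.
* Inverting `x` turns `N` into the flat module `A'_x`, via `S_j ↦ a'_j / x`. Together with the first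
  point this shows that `- ⊗ N` preserves injections out of `K`.
* If `a'` is regular on `M`, then it is regular on the kernel `K` of any surjection from a free
  module onto `M`. Dimension shifting gives `Tor_k^{A'}(M, N) = 0` for `k > 0`, in particular for
  `M = A`.
* As `B'` is flat over `A'` and `B = A ⊗_{A'} B'`, a `B'`-projective resolution of `N` computes
  both `Tor^{B'}(B, N)` and `Tor^{A'}(A, N)`.
-/

universe u

open RingTheory.Sequence TensorProduct

section RegularSequences

variable {R M : Type*} [CommRing R] [AddCommGroup M] [Module R M]

theorem isRegularSequence_iff_isWeaklyRegular (xs : List R) :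
    IsRegularSequence xs ↔ IsWeaklyRegular R xs := by
  rw [isWeaklyRegular_iff]
  refine forall₂_congr fun k hk => ?_
  rw [isSMulRegular_quotient_iff_mem_of_smul_mem, Ideal.smul_eq_mul, Ideal.mul_top,
    Ideal.Quotient.mk_surjective.forall]
  simp only [← map_mul, Ideal.Quotient.eq_zero_iff_mem]
  rfl

theorem idealOfList_ofFn {n : ℕ} (a : Fin n → R) :
    Ideal.ofList (List.ofFn a) = Ideal.span (Set.range a) := by
  simp only [Ideal.ofList, List.mem_ofFn, Set.range]

theorem mem_span_range_smul_top_iff {ι : Type*} [Fintype ι] (a : ι → R) (m : M) :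
    m ∈ Ideal.span (Set.range a) • (⊤ : Submodule R M) ↔ ∃ d : ι → M, m = ∑ i, a i • d i := by
  constructor
  · intro hm
    refine Submodule.smul_induction_on hm (fun r hr m _ => ?_) ?_
    · obtain ⟨c, rfl⟩ := (Submodule.mem_span_range_iff_exists_fun R).1 hr
      exact ⟨fun i => c i • m, by simp only [Finset.sum_smul, smul_eq_mul, smul_smul, mul_comm]⟩
    · rintro _ _ ⟨d, rfl⟩ ⟨d', rfl⟩
      exact ⟨d + d', by simp only [Pi.add_apply, smul_add, Finset.sum_add_distrib]⟩
  · rintro ⟨d, rfl⟩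
    exact Submodule.sum_mem _ fun i _ =>
      Submodule.smul_mem_smul (Ideal.subset_span ⟨i, rfl⟩) Submodule.mem_top

/- This is the vanishing of the first Koszul homology: `c` records the coefficients of the trivial
relations `a j • a k - a k • a j = 0`. -/
theorem exists_koszul_syzygy_of_sum_smul_eq_zero {n : ℕ} {a : Fin n → R}
    (ha : IsWeaklyRegular M (List.ofFn a)) (m : Fin n → M) (hm : ∑ j, a j • m j = 0) :
    ∃ c : Fin n → Fin n → M, ∀ j, m j = ∑ k, a k • (c j k - c k j) := by
  induction n with
  | zero => exact ⟨0, fun j => j.elim0⟩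
  | succ n ih =>
    rw [List.ofFn_succ', List.concat_eq_append, isWeaklyRegular_append_iff,
      isWeaklyRegular_singleton_iff, idealOfList_ofFn,
      isSMulRegular_quotient_iff_mem_of_smul_mem] at ha
    rw [Fin.sum_univ_castSucc] at hm
    obtain ⟨d, hd⟩ : ∃ d : Fin n → M, m (Fin.last n) = ∑ j, a j.castSucc • d j := by
      refine (mem_span_range_smul_top_iff _ _).1 (ha.2 _ ?_)
      rw [eq_neg_of_add_eq_zero_right hm]
      exact neg_mem ((mem_span_range_smul_top_iff _ _).2 ⟨_, rfl⟩)
    obtain ⟨c, hc⟩ := ih ha.1 (fun j => m j.castSucc + a (Fin.last n) • d j) (by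
      rw [← hm, hd]
      simp only [smul_add, Finset.sum_add_distrib, Finset.smul_sum, smul_comm (a (Fin.last n))])
    refine ⟨Fin.lastCases (Fin.snoc d 0) fun j => Fin.snoc (c j) 0, Fin.lastCases ?_ fun j => ?_⟩
    · simpa [Fin.sum_univ_castSucc] using hd
    · simp [Fin.sum_univ_castSucc, ← hc]

theorem isSMulRegular_quotient_span_mul_sub {n : ℕ} {a : Fin n → R}
    (ha : IsWeaklyRegular M (List.ofFn a)) {t : Fin n → R} {i : Fin n} (ht : t i = 1) :
    IsSMulRegular (M ⧸ Ideal.span (Set.range fun j => a i * t j - a j) • (⊤ : Submodule R M))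
      (a i) := by
  rw [isSMulRegular_quotient_iff_mem_of_smul_mem]
  intro p hp
  obtain ⟨q, hq⟩ := (mem_span_range_smul_top_iff _ _).1 hp
  -- The `i`-th generator `a i * t i - a i` is zero, so `q i` may be changed at will.
  obtain ⟨q, hpq, hq⟩ : ∃ q : Fin n → M, p = ∑ j, t j • q j ∧ ∑ j, a j • q j = 0 := by
    refine ⟨q + Pi.single i (p - ∑ j, t j • q j), ?_, ?_⟩
    · simp [Finset.sum_add_distrib, Pi.single_apply, ht]
    · simp [Finset.sum_add_distrib, Pi.single_apply, smul_sub, hq, sub_smul, mul_smul,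
        Finset.smul_sum]
  obtain ⟨c, hc⟩ := exists_koszul_syzygy_of_sum_smul_eq_zero ha q hq
  have cancel : ∑ k, ∑ j, (t k * t j) • (c k j - c j k) = 0 := by
    simp only [smul_sub, Finset.sum_sub_distrib]
    rw [sub_eq_zero, Finset.sum_comm]
    simp only [mul_comm]
  refine (mem_span_range_smul_top_iff _ _).2 ⟨fun k => ∑ j, t j • (c k j - c j k), ?_⟩
  calc
    p = ∑ j, ∑ k, (a k * t j) • (c j k - c k j) := by
      simp only [hpq, hc, Finset.smul_sum, smul_smul, mul_comm]
    _ = a i • ∑ k, ∑ j, (t k * t j) • (c k j - c j k) -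
          ∑ k, ∑ j, (a k * t j) • (c k j - c j k) := by
      rw [cancel, smul_zero, zero_sub, Finset.sum_comm]
      simp only [← Finset.sum_neg_distrib, ← smul_neg, neg_sub]
    _ = ∑ k, (a i * t k - a k) • ∑ j, t j • (c k j - c j k) := by
      simp only [sub_smul (a i * t _), Finset.sum_sub_distrib, Finset.smul_sum, smul_smul,
        mul_assoc]

theorem isWeaklyRegular_of_shortExact {rs : List R} {K L M : Type*} [AddCommGroup K]
    [AddCommGroup L] [AddCommGroup M] [Module R K] [Module R L] [Module R M] {f : K →ₗ[R] L}
    {g : L →ₗ[R] M} (hf : Function.Injective f) (hfg : Function.Exact f g)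
    (hg : Function.Surjective g) (hL : IsWeaklyRegular L rs) (hM : IsWeaklyRegular M rs) :
    IsWeaklyRegular K rs := by
  induction rs generalizing K L M with
  | nil => exact .nil _ _
  | cons r rs ih =>
    rw [isWeaklyRegular_cons_iff] at hL hM ⊢
    have hf' : Function.Injective (QuotSMulTop.map r f) := by
      have h := QuotSMulTop.map_first_exact_on_four_term_exact_of_isSMulRegular_last
        ((LinearMap.exact_zero_iff_injective K f).2 hf) hfg hM.1
      rw [map_zero] at h
      exact (LinearMap.exact_zero_iff_injective _ _).1 h
    exact ⟨hL.1.of_injective f hf, ih hf' (QuotSMulTop.map_exact r hfg hg)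
      (QuotSMulTop.map_surjective r hg) hL.2 hM.2⟩

theorem isWeaklyRegular_ker_linearCombination {rs : List R} (hR : IsWeaklyRegular R rs)
    (hM : IsWeaklyRegular M rs) :
    IsWeaklyRegular (LinearMap.ker (Finsupp.linearCombination R (id : M → M))) rs :=
  isWeaklyRegular_of_shortExact (Submodule.subtype_injective _)
    (LinearMap.exact_subtype_ker_map _) (Finsupp.linearCombination_id_surjective R M)
    (((TensorProduct.rid R (M →₀ R)).isWeaklyRegular_congr rs).1 hR.isWeaklyRegular_lTensor) hM

end RegularSequences

section TensorProducts

theorem injective_lTensor_of_isLocalizedModule_powers {R K L N N' : Type*} [CommRing R]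
    [AddCommGroup K] [AddCommGroup L] [AddCommGroup N] [AddCommGroup N'] [Module R K]
    [Module R L] [Module R N] [Module R N'] (x : R) (e : N →ₗ[R] N')
    [IsLocalizedModule (.powers x) e] [Module.Flat R N'] (hx : IsSMulRegular (N ⊗[R] K) x)
    {f : K →ₗ[R] L} (hf : Function.Injective f) : Function.Injective (f.lTensor N) := by
  have he : Function.Injective (e.rTensor K) := by
    refine (IsLocalizedModule.injective_iff_isRegular (.powers x)
      (TensorProduct.AlgebraTensorModule.rTensor R K e)).2 ?_
    rintro ⟨_, k, rfl⟩
    exact hx.pow k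
  have h : Function.Injective (e.rTensor L ∘ₗ f.lTensor N) := by
    rw [LinearMap.rTensor_comp_lTensor, ← LinearMap.lTensor_comp_rTensor]
    exact (Module.Flat.lTensor_preserves_injective_linearMap f hf).comp he
  exact .of_comp h

theorem lTensor_rTensor_comm_apply {R X Y U V : Type*} [CommRing R] [AddCommGroup X]
    [AddCommGroup Y] [AddCommGroup U] [AddCommGroup V] [Module R X] [Module R Y] [Module R U]
    [Module R V] (d : X →ₗ[R] Y) (h : U →ₗ[R] V) (t : U ⊗[R] X) :
    d.lTensor V (h.rTensor X t) = h.rTensor Y (d.lTensor U t) :=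
  LinearMap.congr_fun ((LinearMap.lTensor_comp_rTensor _ _ _).trans
    (LinearMap.rTensor_comp_lTensor _ _ _).symm) t

theorem exact_lTensor_of_exact {R K L M X₀ X₁ X₂ X₃ : Type*} [CommRing R]
    [AddCommGroup K] [AddCommGroup L] [AddCommGroup M]
    [AddCommGroup X₀] [AddCommGroup X₁] [AddCommGroup X₂] [AddCommGroup X₃]
    [Module R K] [Module R L] [Module R M]
    [Module R X₀] [Module R X₁] [Module R X₂] [Module R X₃]
    {f : K →ₗ[R] L} {g : L →ₗ[R] M} (hfg : Function.Exact f g) (hg : Function.Surjective g)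
    {d₃ : X₃ →ₗ[R] X₂} {d₂ : X₂ →ₗ[R] X₁} {d₁ : X₁ →ₗ[R] X₀}
    (hd₃ : d₂ ∘ₗ d₃ = 0) (hd₂ : d₁ ∘ₗ d₂ = 0)
    (hL : Function.Exact (d₃.lTensor L) (d₂.lTensor L))
    (hK : Function.Exact (d₂.lTensor K) (d₁.lTensor K))
    (hf : Function.Injective (f.rTensor X₀)) :
    Function.Exact (d₃.lTensor M) (d₂.lTensor M) := by
  refine LinearMap.exact_of_comp_eq_zero_of_ker_le_range ?_ ?_
  · rw [← LinearMap.lTensor_comp, hd₃, LinearMap.lTensor_zero]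
  · intro m hm
    obtain ⟨l, rfl⟩ := LinearMap.rTensor_surjective X₂ hg m
    rw [LinearMap.mem_ker, lTensor_rTensor_comm_apply] at hm
    obtain ⟨k, hk⟩ := (rTensor_exact X₁ hfg hg _).1 hm
    have hd₁k : d₁.lTensor K k = 0 := hf <| by
      rw [map_zero, ← lTensor_rTensor_comm_apply, hk, ← LinearMap.lTensor_comp_apply, hd₂,
        LinearMap.lTensor_zero, LinearMap.zero_apply]
    obtain ⟨k, rfl⟩ := (hK _).1 hd₁k
    obtain ⟨l', hl'⟩ : ∃ l', d₃.lTensor L l' = l - f.rTensor X₂ k := (hL _).1 <| by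
      rw [map_sub, ← hk, lTensor_rTensor_comm_apply, sub_self]
    refine ⟨g.rTensor X₃ l', ?_⟩
    rw [lTensor_rTensor_comm_apply, hl', map_sub,
      (rTensor_exact X₂ hfg hg).apply_apply_eq_zero, sub_zero]

theorem exact_lTensor_flatResolution_of_isWeaklyRegular {R : Type u} [CommRing R] {rs : List R}
    (hR : IsWeaklyRegular R rs) {N : Type*} [AddCommGroup N] [Module R N]
    (hN : ∀ {K L : Type u} [AddCommGroup K] [AddCommGroup L] [Module R K] [Module R L]
      (f : K →ₗ[R] L), IsWeaklyRegular K rs → Function.Injective f →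
        Function.Injective (f.rTensor N))
    {P : ℕ → Type*} [∀ n, AddCommGroup (P n)] [∀ n, Module R (P n)] [∀ n, Module.Flat R (P n)]
    {d : ∀ n, P (n + 1) →ₗ[R] P n} (hd : ∀ n, Function.Exact (d (n + 1)) (d n))
    {ε : P 0 →ₗ[R] N} (hdε : Function.Exact (d 0) ε) (hε : Function.Surjective ε) (n : ℕ)
    {M : Type u} [AddCommGroup M] [Module R M] (hM : IsWeaklyRegular M rs) :
    Function.Exact ((d (n + 1)).lTensor M) ((d n).lTensor M) := by
  let π := Finsupp.linearCombination R (id : M → M)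
  have hK : IsWeaklyRegular (LinearMap.ker π) rs := isWeaklyRegular_ker_linearCombination hR hM
  induction n generalizing M with
  | zero =>
    exact exact_lTensor_of_exact (LinearMap.exact_subtype_ker_map π)
      (Finsupp.linearCombination_id_surjective R M) (hd 0).linearMap_comp_eq_zero
      hdε.linearMap_comp_eq_zero (Module.Flat.lTensor_exact _ (hd 0)) (lTensor_exact _ hdε hε)
      (hN _ hK (Submodule.subtype_injective _))
  | succ n ih =>
    exact exact_lTensor_of_exact (LinearMap.exact_subtype_ker_map π)
      (Finsupp.linearCombination_id_surjective R M) (hd _).linearMap_comp_eq_zero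
      (hd _).linearMap_comp_eq_zero (Module.Flat.lTensor_exact _ (hd _))
      (ih hK (isWeaklyRegular_ker_linearCombination hR hK))
      (Module.Flat.rTensor_preserves_injective_linearMap _ (Submodule.subtype_injective _))

section Pushout

variable (R S A B : Type*) [CommRing R] [CommRing S] [CommRing A] [CommRing B] [Algebra R S]
  [Algebra R A] [Algebra R B] [Algebra A B] [Algebra S B] [IsScalarTower R A B]
  [IsScalarTower R S B] [Algebra.IsPushout R S A B] {X Y Z : Type*} [AddCommGroup X]
  [AddCommGroup Y] [AddCommGroup Z] [Module R X] [Module R Y] [Module R Z] [Module A X]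
  [Module A Y] [Module A Z] [IsScalarTower R A X] [IsScalarTower R A Y] [IsScalarTower R A Z]

theorem lTensor_cancelBaseChange_symm (f : X →ₗ[A] Y) (t : S ⊗[R] X) :
    f.lTensor B ((Algebra.IsPushout.cancelBaseChange R S A B X).symm t) =
      (Algebra.IsPushout.cancelBaseChange R S A B Y).symm
        ((f.restrictScalars R).lTensor S t) := by
  induction t with
  | zero => simp only [map_zero]
  | add t t' ht ht' => simp only [map_add, ht, ht']
  | tmul s x =>
    simp only [Algebra.IsPushout.cancelBaseChange_symm_tmul, LinearMap.lTensor_tmul,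
      LinearMap.coe_restrictScalars]

theorem exact_lTensor_iff_of_isPushout (f : X →ₗ[A] Y) (g : Y →ₗ[A] Z) :
    Function.Exact (f.lTensor B) (g.lTensor B) ↔
      Function.Exact ((f.restrictScalars R).lTensor S) ((g.restrictScalars R).lTensor S) :=
  Function.Exact.iff_of_ladder_addEquiv
    (f₁₂ := ((f.restrictScalars R).lTensor S).toAddMonoidHom)
    (f₂₃ := ((g.restrictScalars R).lTensor S).toAddMonoidHom)
    (g₁₂ := (f.lTensor B).toAddMonoidHom) (g₂₃ := (g.lTensor B).toAddMonoidHom)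
    (Algebra.IsPushout.cancelBaseChange R S A B X).symm.toAddEquiv
    (Algebra.IsPushout.cancelBaseChange R S A B Y).symm.toAddEquiv
    (Algebra.IsPushout.cancelBaseChange R S A B Z).symm.toAddEquiv
    (AddMonoidHom.ext (lTensor_cancelBaseChange_symm R S A B f))
    (AddMonoidHom.ext (lTensor_cancelBaseChange_symm R S A B g))

end Pushout

theorem productMap_mkₐ_quotientMapₐ_bijective {R S : Type*} [CommRing R] [CommRing S]
    [Algebra R S] {I : Ideal R} {J : Ideal S} (hJ : I.map (algebraMap R S) = J)
    (hIJ : I ≤ J.comap (Algebra.ofId R S)) :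
    Function.Bijective (Algebra.TensorProduct.productMap (Ideal.Quotient.mkₐ R J)
      (Ideal.quotientMapₐ J (Algebra.ofId R S) hIJ)) := by
  subst hJ
  let e := (Algebra.TensorProduct.quotIdealMapEquivTensorQuot S I).symm.restrictScalars R
  suffices h : Algebra.TensorProduct.productMap (Ideal.Quotient.mkₐ R _)
      (Ideal.quotientMapₐ _ (Algebra.ofId R S) hIJ) = e.toAlgHom from h ▸ e.bijective
  refine Algebra.TensorProduct.ext' fun s q => ?_
  obtain ⟨r, rfl⟩ := Ideal.Quotient.mk_surjective q
  change Ideal.Quotient.mk _ (s * algebraMap R S r) = Ideal.Quotient.mk _ (r • s)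
  rw [Algebra.smul_def, mul_comm]

open CategoryTheory in
theorem subsingleton_tor_succ_of_exact_lTensor {R : Type u} [CommRing R] (M N : ModuleCat.{u} R)
    (n : ℕ) (h : ∀ P : ProjectiveResolution N,
      Function.Exact ((P.complex.d (n + 2) (n + 1)).hom.lTensor M)
        ((P.complex.d (n + 1) n).hom.lTensor M)) :
    Subsingleton (((Tor (ModuleCat R) (n + 1)).obj M).obj N) := by
  let P := projectiveResolution N
  have exactAt : ((((MonoidalCategory.tensoringLeft _).obj M).mapHomologicalComplex _).obj
      P.complex).ExactAt (n + 1) := by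
    rw [HomologicalComplex.exactAt_iff' _ (n + 2) (n + 1) n (by simp) (by simp),
      ShortComplex.ShortExact.moduleCat_exact_iff_function_exact]
    exact h P
  exact ModuleCat.isZero_iff_subsingleton.1 <|
    exactAt.isZero_homology.of_iso (P.isoLeftDerivedObj _ (n + 1))

end TensorProducts

section BlowupChart

open MvPolynomial

variable {R ι : Type*} [CommRing R]

/-- The ideal `(a_i S_j - a_j : j ≠ i)` of `R[S_j : j ≠ i]` defining the `i`-th affine chart of the
blow-up of `R` in the ideal generated by the family `a`. -/
noncomputable def blowupChartIdeal (a : ι → R) (i : ι) : Ideal (MvPolynomial {j // j ≠ i} R) :=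
  Ideal.span (Set.range fun j : {j // j ≠ i} => C (a i) * X j - C (a j.1))

/-- The coordinate ring of the `i`-th affine chart of the blow-up of `R` in the ideal generated by
`a`, given by generators and relations. This is the ring of the chart when `a` is a regular
sequence; for general `a` the Rees algebra may satisfy further relations. -/
abbrev BlowupChart (a : ι → R) (i : ι) := MvPolynomial {j // j ≠ i} R ⧸ blowupChartIdeal a i

theorem C_mul_X_sub_C_mem_blowupChartIdeal (a : ι → R) {i : ι} (j : {j // j ≠ i}) :
    C (a i) * X j - C (a j.1) ∈ blowupChartIdeal a i :=
  Ideal.subset_span ⟨j, rfl⟩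

theorem map_blowupChartIdeal {S : Type*} [CommRing S] [Algebra R S] (a : ι → R) (i : ι) :
    (blowupChartIdeal a i).map
        (algebraMap (MvPolynomial {j // j ≠ i} R) (MvPolynomial {j // j ≠ i} S)) =
      blowupChartIdeal (fun j => algebraMap R S (a j)) i := by
  rw [blowupChartIdeal, blowupChartIdeal, Ideal.map_span, ← Set.range_comp]
  simp only [Function.comp_def, algebraMap_def, map_sub, map_mul, map_C, map_X]

theorem exists_smul_eq_algebraMap_blowupChart (a : ι → R) {i : ι} (p : BlowupChart a i) :
    ∃ (s : Submonoid.powers (a i)) (r : R), s • p = algebraMap R (BlowupChart a i) r := by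
  obtain ⟨p, rfl⟩ := Ideal.Quotient.mk_surjective p
  induction p using MvPolynomial.induction_on with
  | C r => exact ⟨1, r, one_smul _ _⟩
  | add p q hp hq =>
    obtain ⟨s, r, hr⟩ := hp
    obtain ⟨s', r', hr'⟩ := hq
    refine ⟨s * s', s' * r + s * r', ?_⟩
    rw [map_add, map_add, map_mul, map_mul, ← hr, ← hr', ← Algebra.smul_def, ← Algebra.smul_def,
      smul_add, mul_smul, mul_smul, smul_comm s s']
    rfl
  | mul_X p j hp =>
    obtain ⟨s, r, hr⟩ := hp
    have smul_X : a i • Ideal.Quotient.mk (blowupChartIdeal a i) (X j) = algebraMap R _ (a j) :=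
      Ideal.Quotient.eq.2 (by
        simpa [Algebra.smul_def] using C_mul_X_sub_C_mem_blowupChartIdeal a j)
    refine ⟨s * ⟨a i, Submonoid.mem_powers _⟩, r * a j, ?_⟩
    rw [map_mul, map_mul, ← smul_mul_smul_comm, hr, Submonoid.mk_smul, smul_X]

/-- The map from the `i`-th blow-up chart to the localization at `a i` sending `S_j` to
`a j / a i`. -/
noncomputable def blowupChartToAway (a : ι → R) (i : ι) :
    BlowupChart a i →ₐ[R] Localization.Away (a i) :=
  Ideal.Quotient.liftₐ _
    (aeval fun j => IsLocalization.mk' _ (a j)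
      (⟨a i, Submonoid.mem_powers _⟩ : Submonoid.powers (a i)))
    fun p hp => by
      suffices blowupChartIdeal a i ≤ RingHom.ker (aeval _) from this hp
      rw [blowupChartIdeal, Ideal.span_le]
      rintro _ ⟨j, rfl⟩
      simp [RingHom.mem_ker]

instance isLocalizedModule_blowupChartToAway (a : ι → R) (i : ι) :
    IsLocalizedModule (.powers (a i)) (blowupChartToAway a i).toLinearMap where
  map_units := IsLocalizedModule.map_units (Algebra.linearMap R (Localization.Away (a i)))
  surj y := by
    obtain ⟨⟨r, s⟩, h⟩ := IsLocalizedModule.surj (.powers (a i))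
      (Algebra.linearMap R (Localization.Away (a i))) y
    exact ⟨⟨algebraMap R _ r, s⟩, by simpa using h⟩
  exists_of_eq {p q} h := by
    rw [← sub_eq_zero, ← map_sub] at h
    obtain ⟨s, r, hr⟩ := exists_smul_eq_algebraMap_blowupChart a (p - q)
    have hr₀ : algebraMap R (Localization.Away (a i)) r = 0 := by
      rw [← (blowupChartToAway a i).commutes, ← hr]
      exact ((blowupChartToAway a i).toLinearMap.map_smul _ _).trans
        ((congrArg _ h).trans (smul_zero _))
    obtain ⟨s', hs'⟩ := (IsLocalization.map_eq_zero_iff (.powers (a i)) _ _).1 hr₀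
    have smul_r : s' • algebraMap R (BlowupChart a i) r = 0 :=
      ((Algebra.linearMap R (BlowupChart a i)).map_smul s'.1 r).symm.trans
        (by rw [smul_eq_mul, hs', map_zero])
    exact ⟨s' * s, by rw [← sub_eq_zero, ← smul_sub, mul_smul, hr, smul_r]⟩

section WeaklyRegular

variable {K : Type*} [AddCommGroup K] [Module R K] {n : ℕ} {a : Fin n → R}

theorem isSMulRegular_blowupChart_tensorProduct (hK : IsWeaklyRegular K (List.ofFn a))
    (i : Fin n) : IsSMulRegular (BlowupChart a i ⊗[R] K) (a i) := by
  let B := MvPolynomial {j // j ≠ i} R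
  let t : Fin n → B := fun j => if h : j = i then 1 else X ⟨j, h⟩
  have span_t : blowupChartIdeal a i =
      Ideal.span (Set.range fun j => C (a i) * t j - C (a j)) := by
    refine le_antisymm (Ideal.span_mono ?_) (Ideal.span_le.2 ?_)
    · rintro _ ⟨j, rfl⟩
      exact ⟨j, by simp only [t, dif_neg j.2]⟩
    · rintro _ ⟨j, rfl⟩
      by_cases hj : j = i
      · simp [t, hj]
      · simpa [t, hj] using C_mul_X_sub_C_mem_blowupChartIdeal a ⟨j, hj⟩
  have hBK : IsWeaklyRegular (B ⊗[R] K) (List.ofFn fun j => (C (a j) : B)) := by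
    simpa only [List.map_ofFn, algebraMap_eq] using!
      IsWeaklyRegular.of_flat_of_isBaseChange (TensorProduct.isBaseChange R K B) hK
  have regular_C := isSMulRegular_quotient_span_mul_sub hBK (t := t) (i := i) (by simp [t])
  rw [← span_t] at regular_C
  let e := (AlgebraTensorModule.cancelBaseChange R B B (BlowupChart a i) K).symm ≪≫ₗ
    quotTensorEquivQuotSMul _ _
  refine ((e.restrictScalars R).isSMulRegular_congr _).2 fun p q hpq => regular_C ?_
  simpa only [← algebraMap_eq, algebraMap_smul] using hpq

theorem injective_rTensor_blowupChart {L : Type*} [AddCommGroup L] [Module R L]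
    (hK : IsWeaklyRegular K (List.ofFn a)) (i : Fin n) {f : K →ₗ[R] L}
    (hf : Function.Injective f) : Function.Injective (f.rTensor (BlowupChart a i)) :=
  (LinearMap.lTensor_inj_iff_rTensor_inj _ _).1 <|
    have : Module.Flat R (Localization.Away (a i)) := IsLocalization.flat _ (.powers (a i))
    injective_lTensor_of_isLocalizedModule_powers (a i) (blowupChartToAway a i).toLinearMap
      (isSMulRegular_blowupChart_tensorProduct hK i) hf

end WeaklyRegular

open CategoryTheory in
theorem subsingleton_tor_succ_blowupChart {R S : Type u} [CommRing R] [CommRing S] [Algebra R S]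
    {m : ℕ} {a : Fin m → R} (hR : IsWeaklyRegular R (List.ofFn a))
    (hS : IsWeaklyRegular S (List.ofFn a)) (i : Fin m) (n : ℕ) :
    Subsingleton (((Tor (ModuleCat (MvPolynomial {j // j ≠ i} R)) (n + 1)).obj
      (ModuleCat.of _ (MvPolynomial {j // j ≠ i} S))).obj
        (ModuleCat.of _ (BlowupChart a i))) := by
  refine subsingleton_tor_succ_of_exact_lTensor _ _ n fun P => ?_
  let (k : ℕ) : Module R (P.complex.X k) :=
    Module.compHom _ (C : R →+* MvPolynomial {j // j ≠ i} R)
  have (k : ℕ) : IsScalarTower R (MvPolynomial {j // j ≠ i} R) (P.complex.X k) :=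
    .of_algebraMap_smul fun _ _ => rfl
  have (k : ℕ) : Module.Projective (MvPolynomial {j // j ≠ i} R) (P.complex.X k) :=
    (IsProjective.iff_projective _).2 (P.projective k)
  have (k : ℕ) : Module.Flat R (P.complex.X k) := .trans R (MvPolynomial {j // j ≠ i} R) _
  let ε : P.complex.X 0 →ₗ[MvPolynomial {j // j ≠ i} R] BlowupChart a i := (P.π.f 0).hom
  have exact_d (k : ℕ) :=
    (ShortComplex.ShortExact.moduleCat_exact_iff_function_exact _).1 (P.exact_succ k)
  have exact_ε := (ShortComplex.ShortExact.moduleCat_exact_iff_function_exact _).1 P.exact₀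
  have surjective_ε : Function.Surjective ε :=
    (ModuleCat.epi_iff_surjective (P.π.f 0)).1 inferInstance
  exact (exact_lTensor_iff_of_isPushout R S _ _ _ _).2 <|
    exact_lTensor_flatResolution_of_isWeaklyRegular hR
      (fun _ hK => injective_rTensor_blowupChart hK i) (P := fun k => P.complex.X k)
      (d := fun k => (P.complex.d (k + 1) k).hom.restrictScalars R) (ε := ε.restrictScalars R)
      exact_d exact_ε surjective_ε n hS

open CategoryTheory in
theorem statement6_general {A' A : Type u} [CommRing A'] [CommRing A] [Algebra A' A] {n : ℕ}
    {a' : Fin n → A'} (hreg' : IsRegularSequence ((List.finRange n).map a'))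
    (hreg : IsRegularSequence ((List.finRange n).map fun j => algebraMap A' A (a' j)))
    (i : Fin n) {k : ℕ} (hk : 0 < k) :
    Subsingleton
        (((Tor (ModuleCat (MvPolynomial {j // j ≠ i} A')) k).obj
          (ModuleCat.of _ (MvPolynomial {j // j ≠ i} A))).obj
            (ModuleCat.of _ (BlowupChart a' i))) ∧
      Function.Bijective
        (Algebra.TensorProduct.productMap
          (Ideal.Quotient.mkₐ (MvPolynomial {j // j ≠ i} A')
            (blowupChartIdeal (fun j => algebraMap A' A (a' j)) i))
          (Ideal.quotientMapₐ (I := blowupChartIdeal a' i)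
            (blowupChartIdeal (fun j => algebraMap A' A (a' j)) i)
            (Algebra.ofId (MvPolynomial {j // j ≠ i} A') (MvPolynomial {j // j ≠ i} A))
            (Ideal.map_le_iff_le_comap.1 (map_blowupChartIdeal a' i).le))) := by
  obtain ⟨k, rfl⟩ := Nat.exists_eq_add_one.2 hk
  rw [isRegularSequence_iff_isWeaklyRegular] at hreg' hreg
  have hA' : IsWeaklyRegular A' (List.ofFn a') := by rwa [List.ofFn_eq_map]
  have hA : IsWeaklyRegular A (List.ofFn a') := by
    rwa [List.ofFn_eq_map, ← isWeaklyRegular_map_algebraMap_iff A A, List.map_map]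
  exact ⟨subsingleton_tor_succ_blowupChart hA' hA i k,
    productMap_mkₐ_quotientMapₐ_bijective (map_blowupChartIdeal a' i) _⟩

end BlowupChart

open CategoryTheory MvPolynomial in
theorem statement6 (A' A : Type) [CommRing A'] [IsNoetherianRing A'] [IsLocalRing A']
    [CommRing A] [IsNoetherianRing A] [IsLocalRing A] [Algebra A' A]
    (r : ℕ) (hr : 1 ≤ r) (a' : Fin (r + 1) → A')
    (hreg' : IsRegularSequence ((List.finRange (r + 1)).map a'))
    (hreg : IsRegularSequence ((List.finRange (r + 1)).map (fun j => algebraMap A' A (a' j))))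
    (i : Fin (r + 1)) (k : ℕ) (hk : 0 < k) :
    Subsingleton
        (((Tor (ModuleCat (MvPolynomial {j : Fin (r + 1) // j ≠ i} A')) k).obj
            (ModuleCat.of _ (MvPolynomial {j : Fin (r + 1) // j ≠ i} A))).obj
          (ModuleCat.of _ (MvPolynomial {j : Fin (r + 1) // j ≠ i} A' ⧸
            Ideal.span (Set.range fun j : {j : Fin (r + 1) // j ≠ i} =>
              C (a' i) * X j - C (a' j.1))))) ∧
      Function.Bijective
        (Algebra.TensorProduct.productMap
          (Ideal.Quotient.mkₐ (MvPolynomial {j : Fin (r + 1) // j ≠ i} A')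
            (Ideal.span (Set.range fun j : {j : Fin (r + 1) // j ≠ i} =>
              C (algebraMap A' A (a' i)) * X j - C (algebraMap A' A (a' j.1)))))
          (Ideal.quotientMapₐ
            (I := Ideal.span (Set.range fun j : {j : Fin (r + 1) // j ≠ i} =>
              C (a' i) * X j - C (a' j.1)))
            (Ideal.span (Set.range fun j : {j : Fin (r + 1) // j ≠ i} =>
              C (algebraMap A' A (a' i)) * X j - C (algebraMap A' A (a' j.1))))
            (Algebra.ofId (MvPolynomial {j : Fin (r + 1) // j ≠ i} A')
              (MvPolynomial {j : Fin (r + 1) // j ≠ i} A))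
            (by
              rw [Ideal.span_le]
              rintro p ⟨j, rfl⟩
              simp only [SetLike.mem_coe, Ideal.mem_comap, Algebra.ofId_apply,
                MvPolynomial.algebraMap_def, map_sub, map_mul, MvPolynomial.map_C,
                MvPolynomial.map_X]
              exact Ideal.subset_span ⟨j, rfl⟩))) := by
  exact statement6_general hreg' hreg i hk
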